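/- arXiv:2507.09833 — 2 statements merged into one kernel-verified Lean document; each statement's English description precedes it below -/
import Mathlib

section
/- Let 𝒳, 𝒴, 𝒵, 𝒜 be nonempty finite sets, L : 𝒴 × 𝒜 → ℝ a loss function, and P a joint probability mass function on 𝒳 × 𝒴 × 𝒵 under which Y and Z are conditionally independent given X. Then the generalized-entropy data processing inequality holds: H_L(Y | Z) ≥ H_L(Y | X), i.e., ∑_{z∈𝒵} P(Z=z) · min_{a∈𝒜} ∑_{y∈𝒴} P(Y=y | Z=z) L(y,a) ≥ ∑_{x∈𝒳} P(X=x) · min_{a∈𝒜} ∑_{y∈𝒴} P(Y=y | X=x) L(y,a), where terms whose conditioning event has probability 0 contribute 0. -/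
/-!
Fix `z`, and let `a` be an optimal action given `Z = z`. Conditional independence gives
`P(x, y, z) = P(y | x) P(x, z)`, so the part of the unnormalized risk of `a` coming from `x` is
`P(x, z) ∑ y, P(y | x) L(y, a)`, which is at least `P(x, z) H_L(Y | X = x)`
(`joint_mul_entropy_le`). Summing over `x` bounds `P(z) H_L(Y | Z = z)` below by
`∑ x, P(x, z) H_L(Y | X = x)`, and summing over `z` turns the right side into `H_L(Y | X)`.
-/

open Finset

/-- The contribution of a fixed pair `(x, z)`: here `p y = P(x, y, z)` and `r y = P(x, y)`, and
`hCI` is conditional independence at `(x, z)`. If `P(x) = 0`, then both sides vanish. -/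
lemma joint_mul_entropy_le {𝒴 𝒜 : Type*} [Fintype 𝒴] [Fintype 𝒜] [Nonempty 𝒜]
    (L : 𝒴 × 𝒜 → ℝ) (p r : 𝒴 → ℝ) (hp : ∀ y, 0 ≤ p y) (hpr : ∀ y, p y ≤ r y)
    (hCI : ∀ y, p y * ∑ y', r y' = r y * ∑ y', p y') (a : 𝒜) :
    (∑ y, p y) * (univ.inf' univ_nonempty fun a : 𝒜 => ∑ y, (r y / ∑ y, r y) * L (y, a))
      ≤ ∑ y, p y * L (y, a) := by
  by_cases h0 : ∑ y, r y = 0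
  · have hr : ∀ y, r y = 0 := fun y =>
      (sum_eq_zero_iff_of_nonneg fun y _ => (hp y).trans (hpr y)).1 h0 y (mem_univ y)
    have hp' : ∀ y, p y = 0 := fun y => le_antisymm ((hpr y).trans_eq (hr y)) (hp y)
    simp [hp']
  · calc _ ≤ (∑ y, p y) * ∑ y, (r y / ∑ y, r y) * L (y, a) :=
          mul_le_mul_of_nonneg_left (inf'_le _ (mem_univ a)) (sum_nonneg fun y _ => hp y)
      _ = ∑ y, p y * L (y, a) := by
          rw [mul_sum]
          refine sum_congr rfl fun y _ => ?_
          have h : p y = r y / (∑ y, r y) * ∑ y, p y := by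
            rw [div_mul_eq_mul_div, eq_div_iff h0, hCI y]
          rw [h]
          ring

/-- Generalized-entropy data processing inequality. If `Y` and
`Z` are conditionally independent given `X` under the joint pmf `P`, then
`H_L(Y | Z) ≥ H_L(Y | X)`. Terms whose conditioning event has probability 0
contribute 0 (in Lean, division by zero yields 0, which realizes this
convention). -/
theorem stmt_8 {𝒳 𝒴 𝒵 𝒜 : Type*}
    [Fintype 𝒳] [Fintype 𝒴] [Fintype 𝒵] [Fintype 𝒜]
    [Nonempty 𝒳] [Nonempty 𝒴] [Nonempty 𝒵] [Nonempty 𝒜]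
    (L : 𝒴 × 𝒜 → ℝ) (P : 𝒳 × 𝒴 × 𝒵 → ℝ)
    (hP0 : ∀ x y z, 0 ≤ P (x, y, z))
    (hP1 : ∑ x, ∑ y, ∑ z, P (x, y, z) = 1)
    (hCI : ∀ x y z,
      P (x, y, z) * (∑ y', ∑ z', P (x, y', z'))
        = (∑ z', P (x, y, z')) * (∑ y', P (x, y', z))) :
    ∑ z, (∑ x, ∑ y, P (x, y, z)) *
        (univ.inf' univ_nonempty fun a : 𝒜 =>
          ∑ y, ((∑ x, P (x, y, z)) / (∑ x, ∑ y, P (x, y, z))) * L (y, a))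
      ≥ ∑ x, (∑ y, ∑ z, P (x, y, z)) *
          (univ.inf' univ_nonempty fun a : 𝒜 =>
            ∑ y, ((∑ z, P (x, y, z)) / (∑ y, ∑ z, P (x, y, z))) * L (y, a)) := by
  have hz : ∀ z, ∑ x, (∑ y, P (x, y, z)) *
      (univ.inf' univ_nonempty fun a : 𝒜 =>
        ∑ y, ((∑ z, P (x, y, z)) / (∑ y, ∑ z, P (x, y, z))) * L (y, a))
      ≤ (∑ x, ∑ y, P (x, y, z)) *
        (univ.inf' univ_nonempty fun a : 𝒜 =>
          ∑ y, ((∑ x, P (x, y, z)) / (∑ x, ∑ y, P (x, y, z))) * L (y, a)) := by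
    intro z
    obtain ⟨a, -, ha⟩ := exists_mem_eq_inf' (univ_nonempty (α := 𝒜)) fun a : 𝒜 =>
      ∑ y, ((∑ x, P (x, y, z)) / (∑ x, ∑ y, P (x, y, z))) * L (y, a)
    rw [ha]
    calc _ ≤ ∑ x, ∑ y, P (x, y, z) * L (y, a) :=
          sum_le_sum fun x _ => joint_mul_entropy_le L (fun y => P (x, y, z))
            (fun y => ∑ z, P (x, y, z)) (fun y => hP0 x y z)
            (fun y => single_le_sum (f := fun z => P (x, y, z)) (fun z _ => hP0 x y z)
              (mem_univ z))
            (fun y => hCI x y z) a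
      _ = ∑ y, (∑ x, P (x, y, z)) * L (y, a) := by
          rw [sum_comm]
          simp only [sum_mul]
      _ = _ := by
          rw [mul_sum]
          refine sum_congr rfl fun y _ => ?_
          by_cases h0 : ∑ x, ∑ y, P (x, y, z) = 0
          · -- If `P(z) = 0`, then every `P(x, y, z)` vanishes and the quotient is irrelevant.
            have h : ∀ x, P (x, y, z) = 0 := fun x =>
              (sum_eq_zero_iff_of_nonneg fun y _ => hP0 x y z).1
                ((sum_eq_zero_iff_of_nonneg fun x _ => sum_nonneg fun y _ => hP0 x y z).1 h0 x
                  (mem_univ x)) y (mem_univ y)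
            simp [h]
          · rw [← mul_assoc, mul_div_cancel₀ _ h0]
  refine ge_iff_le.2 (le_trans (le_of_eq ?_) (sum_le_sum fun z _ => hz z))
  rw [sum_comm]
  refine sum_congr rfl fun x _ => ?_
  rw [← sum_mul, sum_comm]
end

section
/- Let 𝒳, 𝒴, 𝒵, 𝒜 be nonempty finite sets, L : 𝒴 × 𝒜 → ℝ a loss function, and P a joint probability mass function on 𝒳 × 𝒴 × 𝒵 under which Y and Z are conditionally independent given X. Then for every z ∈ 𝒵 with P(Z=z) > 0, ∑_{x∈𝒳} P(X=x | Z=z) · H_L(Y | X=x) ≤ H_L(Y | Z=z), where terms with P(X=x, Z=z) = 0 contribute 0; that is, the expected generalized conditional entropy after receiving a fresh observation X is no larger than the generalized conditional entropy based only on the stale observation Z=z, so a successfully delivered status update cannot increase the expected estimation loss. -/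
/-!
Fix an action `a`. For each `x`, the entropy `H_L(Y | X = x)` is at most the conditional loss of `a`
given `X = x`. Averaging against `P(X = x | Z = z)` and using the Markov identity
`P(X = x | Z = z) P(Y = y | X = x) = P(X = x, Y = y | Z = z)` (conditional independence), the sum
over `x` collapses to the conditional loss of `a` given `Z = z`. Minimizing over `a` gives the claim.
-/

open Finset

/-- If `Y` and `Z` are conditionally independent given `X`, then
for every `z` with `P(Z=z) > 0`, the expected generalized conditional entropy
after receiving a fresh observation `X` is no larger than the generalized
conditional entropy based only on the stale observation `Z=z`:
`∑_x P(X=x|Z=z) · H_L(Y|X=x) ≤ H_L(Y|Z=z)`. Terms with `P(X=x, Z=z) = 0`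
contribute 0 (in Lean, division by zero yields 0, which realizes this
convention). -/
theorem stmt_10 {𝒳 𝒴 𝒵 𝒜 : Type*}
    [Fintype 𝒳] [Fintype 𝒴] [Fintype 𝒵] [Fintype 𝒜]
    [Nonempty 𝒳] [Nonempty 𝒴] [Nonempty 𝒵] [Nonempty 𝒜]
    (L : 𝒴 × 𝒜 → ℝ) (P : 𝒳 × 𝒴 × 𝒵 → ℝ)
    (hP0 : ∀ x y z, 0 ≤ P (x, y, z))
    (hP1 : ∑ x, ∑ y, ∑ z, P (x, y, z) = 1)
    (hCI : ∀ x y z,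
      P (x, y, z) * (∑ y', ∑ z', P (x, y', z'))
        = (∑ z', P (x, y, z')) * (∑ y', P (x, y', z)))
    (z : 𝒵) (hz : 0 < ∑ x, ∑ y, P (x, y, z)) :
    ∑ x, ((∑ y, P (x, y, z)) / (∑ x, ∑ y, P (x, y, z))) *
        (univ.inf' univ_nonempty fun a : 𝒜 =>
          ∑ y, ((∑ z, P (x, y, z)) / (∑ y, ∑ z, P (x, y, z))) * L (y, a))
      ≤ univ.inf' univ_nonempty fun a : 𝒜 =>
          ∑ y, ((∑ x, P (x, y, z)) / (∑ x, ∑ y, P (x, y, z))) * L (y, a) := by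
  -- The identity `P(x | z) P(y | x) = P(x, y | z)`; when `P(X = x) = 0` both sides vanish.
  have markov : ∀ x y, ((∑ y, P (x, y, z)) / (∑ x, ∑ y, P (x, y, z))) *
      ((∑ z, P (x, y, z)) / (∑ y, ∑ z, P (x, y, z)))
        = P (x, y, z) / (∑ x, ∑ y, P (x, y, z)) := by
    intro x y
    have hle : P (x, y, z) ≤ ∑ y, ∑ z, P (x, y, z) :=
      (single_le_sum (f := fun z => P (x, y, z)) (fun z _ => hP0 x y z) (mem_univ z)).trans
        (single_le_sum (f := fun y => ∑ z, P (x, y, z))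
          (fun y _ => sum_nonneg fun z _ => hP0 x y z) (mem_univ y))
    have hci := hCI x y z
    have hnn := hP0 x y z
    rcases eq_or_ne (∑ y, ∑ z, P (x, y, z)) 0 with h0 | h0
    · have : P (x, y, z) = 0 := le_antisymm (h0 ▸ hle) hnn
      simp [h0, this]
    · rw [div_mul_div_comm, div_eq_div_iff (mul_ne_zero hz.ne' h0) hz.ne']
      linear_combination -(∑ x, ∑ y, P (x, y, z)) * hci
  refine le_inf' _ _ fun a _ => ?_
  calc _ ≤ ∑ x, ((∑ y, P (x, y, z)) / (∑ x, ∑ y, P (x, y, z))) *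
          ∑ y, ((∑ z, P (x, y, z)) / (∑ y, ∑ z, P (x, y, z))) * L (y, a) := by
        refine sum_le_sum fun x _ => mul_le_mul_of_nonneg_left ?_
          (div_nonneg (sum_nonneg fun y _ => hP0 x y z) hz.le)
        exact inf'_le (fun a : 𝒜 =>
          ∑ y, ((∑ z, P (x, y, z)) / (∑ y, ∑ z, P (x, y, z))) * L (y, a)) (mem_univ a)
    _ = ∑ x, ∑ y, P (x, y, z) / (∑ x, ∑ y, P (x, y, z)) * L (y, a) := by
        simp only [mul_sum, ← mul_assoc, markov]
    _ = _ := by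
        rw [sum_comm]
        simp only [sum_div, sum_mul]
end
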